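/- arXiv:1605.03995 — 2 statements merged into one kernel-verified Lean document; each statement's English description precedes it below -/
import Mathlib

section
/- The algebra homomorphisms K → k are exactly the four maps α_λ indexed by the 4th roots of unity λ ∈ k, where α_λ(a) = λ, α_λ(b) = α_λ(c) = 0, α_λ(d) = λ⁻¹. Moreover, under the convolution product (f ∗ g)(h) = Σ f(h₍₁₎)g(h₍₂₎) determined by the comultiplication Δ of K, these four homomorphisms form a group isomorphic to Z/4Z, generated by α_{ξ⁻¹}. -/
open scoped TensorProduct

/-- Generators of the Hopf algebra `K`. -/
inductive KGen : Type
  | a | b | c | d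

open FreeAlgebra in
/-- The defining relations of the algebra `K`. -/
inductive KRel (𝕜 : Type) [Field 𝕜] (ξ : 𝕜) :
    FreeAlgebra 𝕜 KGen → FreeAlgebra 𝕜 KGen → Prop
  | ab : KRel 𝕜 ξ (ι 𝕜 KGen.a * ι 𝕜 KGen.b) (ξ • (ι 𝕜 KGen.b * ι 𝕜 KGen.a))
  | ac : KRel 𝕜 ξ (ι 𝕜 KGen.a * ι 𝕜 KGen.c) (ξ • (ι 𝕜 KGen.c * ι 𝕜 KGen.a))
  | cb : KRel 𝕜 ξ (ι 𝕜 KGen.c * ι 𝕜 KGen.b) 0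
  | bc : KRel 𝕜 ξ (ι 𝕜 KGen.b * ι 𝕜 KGen.c) 0
  | cd : KRel 𝕜 ξ (ι 𝕜 KGen.c * ι 𝕜 KGen.d) (ξ • (ι 𝕜 KGen.d * ι 𝕜 KGen.c))
  | bd : KRel 𝕜 ξ (ι 𝕜 KGen.b * ι 𝕜 KGen.d) (ξ • (ι 𝕜 KGen.d * ι 𝕜 KGen.b))
  | adcomm : KRel 𝕜 ξ (ι 𝕜 KGen.a * ι 𝕜 KGen.d) (ι 𝕜 KGen.d * ι 𝕜 KGen.a)
  | adone : KRel 𝕜 ξ (ι 𝕜 KGen.a * ι 𝕜 KGen.d) 1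
  | bsq : KRel 𝕜 ξ (ι 𝕜 KGen.b * ι 𝕜 KGen.b) 0
  | csq : KRel 𝕜 ξ (ι 𝕜 KGen.c * ι 𝕜 KGen.c) 0
  | aac : KRel 𝕜 ξ (ι 𝕜 KGen.a * ι 𝕜 KGen.a * ι 𝕜 KGen.c) (ι 𝕜 KGen.b)
  | afour : KRel 𝕜 ξ (ι 𝕜 KGen.a ^ 4) 1

/-- The 8-dimensional algebra `K`, the smallest Hopf algebra whose coradical is not a
subalgebra, presented by generators and relations. -/
abbrev KAlg (𝕜 : Type) [Field 𝕜] (ξ : 𝕜) : Type := RingQuot (KRel 𝕜 ξ)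

variable (𝕜 : Type) [Field 𝕜] (ξ : 𝕜)

/-- The generator `a` of `K`. -/
noncomputable def kA : KAlg 𝕜 ξ := RingQuot.mkAlgHom 𝕜 (KRel 𝕜 ξ) (FreeAlgebra.ι 𝕜 KGen.a)
/-- The generator `b` of `K`. -/
noncomputable def kB : KAlg 𝕜 ξ := RingQuot.mkAlgHom 𝕜 (KRel 𝕜 ξ) (FreeAlgebra.ι 𝕜 KGen.b)
/-- The generator `c` of `K`. -/
noncomputable def kC : KAlg 𝕜 ξ := RingQuot.mkAlgHom 𝕜 (KRel 𝕜 ξ) (FreeAlgebra.ι 𝕜 KGen.c)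
/-- The generator `d` of `K`. -/
noncomputable def kD : KAlg 𝕜 ξ := RingQuot.mkAlgHom 𝕜 (KRel 𝕜 ξ) (FreeAlgebra.ι 𝕜 KGen.d)

/-- The comultiplication of `K` takes the prescribed values on the generators. -/
def KComulOn (Δ : KAlg 𝕜 ξ →ₐ[𝕜] KAlg 𝕜 ξ ⊗[𝕜] KAlg 𝕜 ξ) : Prop :=
  Δ (kA 𝕜 ξ) = kA 𝕜 ξ ⊗ₜ[𝕜] kA 𝕜 ξ + kB 𝕜 ξ ⊗ₜ[𝕜] kC 𝕜 ξ ∧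
  Δ (kB 𝕜 ξ) = kA 𝕜 ξ ⊗ₜ[𝕜] kB 𝕜 ξ + kB 𝕜 ξ ⊗ₜ[𝕜] kD 𝕜 ξ ∧
  Δ (kC 𝕜 ξ) = kC 𝕜 ξ ⊗ₜ[𝕜] kA 𝕜 ξ + kD 𝕜 ξ ⊗ₜ[𝕜] kC 𝕜 ξ ∧
  Δ (kD 𝕜 ξ) = kC 𝕜 ξ ⊗ₜ[𝕜] kB 𝕜 ξ + kD 𝕜 ξ ⊗ₜ[𝕜] kD 𝕜 ξ

/-- The counit of `K` takes the prescribed values on the generators. -/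
def KCounitOn (ε : KAlg 𝕜 ξ →ₐ[𝕜] 𝕜) : Prop :=
  ε (kA 𝕜 ξ) = 1 ∧ ε (kB 𝕜 ξ) = 0 ∧ ε (kC 𝕜 ξ) = 0 ∧ ε (kD 𝕜 ξ) = 1

/-- The convolution product of two linear functionals on `K`, with respect to a
comultiplication `Δ`: `(f ∗ g)(h) = Σ f(h₍₁₎) g(h₍₂₎)`. -/
noncomputable def KConv (𝕜 : Type) [Field 𝕜] (ξ : 𝕜)
    (Δ : KAlg 𝕜 ξ →ₐ[𝕜] KAlg 𝕜 ξ ⊗[𝕜] KAlg 𝕜 ξ)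
    (f g : KAlg 𝕜 ξ →ₗ[𝕜] 𝕜) : KAlg 𝕜 ξ →ₗ[𝕜] 𝕜 :=
  LinearMap.mul' 𝕜 𝕜 ∘ₗ TensorProduct.map f g ∘ₗ Δ.toLinearMap

/-!
Let `R` be a commutative `𝕜`-algebra. A fourth root of unity `u` of `R` defines a homomorphism
`α_u : K → R`. If `R` is reduced, every homomorphism `K → R` is of this form: it kills `b` and `c`,
whose squares vanish, and `a⁴ = 1`, `ad = 1` then say that it is `α_u` for the image `u` of `a`.
Modulo `b` and `c` the element `a` is grouplike, so convolution multiplies the roots of unity: `K`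
represents `μ₄` on reduced algebras. Over a field containing a primitive fourth root of unity, the
group `μ₄` is cyclic of order 4.
-/

section RootsOfUnity

variable {R : Type*} [CommRing R] [IsDomain R] {k : ℕ} [NeZero k] {ζ : Rˣ}

/-- The isomorphism of `ℤ/k` with the `k`-th roots of unity of a domain that sends `1` to a given
primitive root. -/
noncomputable def zmodEquivRootsOfUnity (hζ : IsPrimitiveRoot ζ k) :
    ZMod k ≃+ Additive (rootsOfUnity k R) :=
  hζ.zmodEquivZPowers.trans (MulEquiv.subgroupCongr hζ.zpowers_eq).toAdditive

lemma coe_zmodEquivRootsOfUnity_one (hζ : IsPrimitiveRoot ζ k) :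
    ((zmodEquivRootsOfUnity hζ 1).toMul : Rˣ) = ζ := by
  have h : hζ.zmodEquivZPowers 1 = Additive.ofMul ⟨ζ, Subgroup.mem_zpowers ζ⟩ := by
    simpa using hζ.zmodEquivZPowers_apply_coe_nat 1
  simp [zmodEquivRootsOfUnity, h]

end RootsOfUnity

namespace KAlg

variable {𝕜 ξ}

lemma kA_pow_four : kA 𝕜 ξ ^ 4 = 1 := by
  simpa [kA] using RingQuot.mkAlgHom_rel 𝕜 (KRel.afour (ξ := ξ))

lemma kA_mul_kD : kA 𝕜 ξ * kD 𝕜 ξ = 1 := by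
  simpa [kA, kD] using RingQuot.mkAlgHom_rel 𝕜 (KRel.adone (ξ := ξ))

lemma kB_sq : kB 𝕜 ξ ^ 2 = 0 := by
  simpa [kB, sq] using RingQuot.mkAlgHom_rel 𝕜 (KRel.bsq (ξ := ξ))

lemma kC_sq : kC 𝕜 ξ ^ 2 = 0 := by
  simpa [kC, sq] using RingQuot.mkAlgHom_rel 𝕜 (KRel.csq (ξ := ξ))

lemma algHom_ext {A : Type*} [Semiring A] [Algebra 𝕜 A] {f g : KAlg 𝕜 ξ →ₐ[𝕜] A}
    (ha : f (kA 𝕜 ξ) = g (kA 𝕜 ξ)) (hb : f (kB 𝕜 ξ) = g (kB 𝕜 ξ))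
    (hc : f (kC 𝕜 ξ) = g (kC 𝕜 ξ)) (hd : f (kD 𝕜 ξ) = g (kD 𝕜 ξ)) : f = g := by
  refine RingQuot.ringQuot_ext' _ f g (FreeAlgebra.hom_ext (funext fun x => ?_))
  cases x
  exacts [ha, hb, hc, hd]

section Characters

variable {R : Type*} [CommSemiring R] [Algebra 𝕜 R]

/-- The homomorphism `α_u : K → R` attached to a fourth root of unity `u` of `R`. -/
noncomputable def alpha (u : rootsOfUnity 4 R) : KAlg 𝕜 ξ →ₐ[𝕜] R :=
  RingQuot.liftAlgHom 𝕜 ⟨FreeAlgebra.lift 𝕜 fun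
    | .a => ((u : Rˣ) : R)
    | .b => 0
    | .c => 0
    | .d => ((u⁻¹ : Rˣ) : R), by
    have hu : ((u : Rˣ) : R) ^ 4 = 1 := (mem_rootsOfUnity' 4 _).mp u.2
    rintro _ _ (_ | _) <;> simp [hu]⟩

@[simp]
lemma alpha_kA (u : rootsOfUnity 4 R) : alpha u (kA 𝕜 ξ) = (u : Rˣ) := by
  simp [alpha, kA]

@[simp]
lemma alpha_kB (u : rootsOfUnity 4 R) : alpha u (kB 𝕜 ξ) = 0 := by
  simp [alpha, kB]

@[simp]
lemma alpha_kC (u : rootsOfUnity 4 R) : alpha u (kC 𝕜 ξ) = 0 := by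
  simp [alpha, kC]

@[simp]
lemma alpha_kD (u : rootsOfUnity 4 R) : alpha u (kD 𝕜 ξ) = ((u⁻¹ : Rˣ) : R) := by
  simp [alpha, kD]

lemma map_kB_eq_zero [IsReduced R] (f : KAlg 𝕜 ξ →ₐ[𝕜] R) : f (kB 𝕜 ξ) = 0 :=
  eq_zero_of_pow_eq_zero (n := 2) (by rw [← map_pow, kB_sq, map_zero])

lemma map_kC_eq_zero [IsReduced R] (f : KAlg 𝕜 ξ →ₐ[𝕜] R) : f (kC 𝕜 ξ) = 0 :=
  eq_zero_of_pow_eq_zero (n := 2) (by rw [← map_pow, kC_sq, map_zero])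

lemma eq_alpha [IsReduced R] {f : KAlg 𝕜 ξ →ₐ[𝕜] R} {u : rootsOfUnity 4 R}
    (hu : f (kA 𝕜 ξ) = (u : Rˣ)) : f = alpha u := by
  have hd : ((u : Rˣ) : R) * f (kD 𝕜 ξ) = 1 := by rw [← hu, ← map_mul, kA_mul_kD, map_one]
  refine algHom_ext ?_ ?_ ?_ ?_
  · rw [hu, alpha_kA]
  · rw [map_kB_eq_zero, alpha_kB]
  · rw [map_kC_eq_zero, alpha_kC]
  · rw [alpha_kD, Units.mul_eq_one_iff_inv_eq.mp hd]

/-- The correspondence `u ↦ α_u` between the fourth roots of unity of a reduced algebra `R` and the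
homomorphisms `K → R`; its inverse evaluates a homomorphism at `a`. -/
noncomputable def alphaEquiv [IsReduced R] : rootsOfUnity 4 R ≃ (KAlg 𝕜 ξ →ₐ[𝕜] R) where
  toFun := alpha
  invFun f := rootsOfUnity.mkOfPowEq (f (kA 𝕜 ξ)) (by rw [← map_pow, kA_pow_four, map_one])
  left_inv u := rootsOfUnity.coe_injective (alpha_kA u)
  right_inv _ := (eq_alpha rfl).symm

@[simp]
lemma alphaEquiv_apply [IsReduced R] (u : rootsOfUnity 4 R) :
    alphaEquiv u = alpha (𝕜 := 𝕜) (ξ := ξ) u := rfl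

end Characters

section Convolution

variable {Δ : KAlg 𝕜 ξ →ₐ[𝕜] KAlg 𝕜 ξ ⊗[𝕜] KAlg 𝕜 ξ}

lemma productMap_alpha_comp_comul {R : Type*} [CommSemiring R] [Algebra 𝕜 R]
    (hΔ : KComulOn 𝕜 ξ Δ) (u v : rootsOfUnity 4 R) :
    (Algebra.TensorProduct.productMap (alpha u) (alpha v)).comp Δ = alpha (u * v) := by
  obtain ⟨ha, hb, hc, hd⟩ := hΔ
  apply algHom_ext <;> simp [ha, hb, hc, hd, mul_comm]

lemma kConv_eq_productMap_comp (f g : KAlg 𝕜 ξ →ₐ[𝕜] 𝕜) :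
    KConv 𝕜 ξ Δ f.toLinearMap g.toLinearMap =
      ((Algebra.TensorProduct.productMap f g).comp Δ).toLinearMap := by
  rw [Algebra.TensorProduct.productMap_eq_comp_map]
  rfl

lemma kConv_alpha (hΔ : KComulOn 𝕜 ξ Δ) (u v : rootsOfUnity 4 𝕜) :
    KConv 𝕜 ξ Δ (alpha u).toLinearMap (alpha v).toLinearMap = (alpha (u * v)).toLinearMap := by
  rw [kConv_eq_productMap_comp, productMap_alpha_comp_comul hΔ]

end Convolution

end KAlg

theorem stmt_2_general (𝕜 : Type) [Field 𝕜] (ξ : 𝕜) (hξ : IsPrimitiveRoot ξ 4)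
    (Δ : KAlg 𝕜 ξ →ₐ[𝕜] KAlg 𝕜 ξ ⊗[𝕜] KAlg 𝕜 ξ) (hΔ : KComulOn 𝕜 ξ Δ) :
    (∀ f : KAlg 𝕜 ξ →ₐ[𝕜] 𝕜, ∃ lam : 𝕜, lam ^ 4 = 1 ∧
      f (kA 𝕜 ξ) = lam ∧ f (kB 𝕜 ξ) = 0 ∧ f (kC 𝕜 ξ) = 0 ∧ f (kD 𝕜 ξ) = lam⁻¹) ∧
    (∀ lam : 𝕜, lam ^ 4 = 1 → ∃! f : KAlg 𝕜 ξ →ₐ[𝕜] 𝕜,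
      f (kA 𝕜 ξ) = lam ∧ f (kB 𝕜 ξ) = 0 ∧ f (kC 𝕜 ξ) = 0 ∧ f (kD 𝕜 ξ) = lam⁻¹) ∧
    (∃ φ : ZMod 4 ≃ (KAlg 𝕜 ξ →ₐ[𝕜] 𝕜),
      ((φ 1) (kA 𝕜 ξ) = ξ⁻¹ ∧ (φ 1) (kB 𝕜 ξ) = 0 ∧ (φ 1) (kC 𝕜 ξ) = 0 ∧
        (φ 1) (kD 𝕜 ξ) = ξ) ∧
      ∀ m n : ZMod 4,
        KConv 𝕜 ξ Δ (φ m).toLinearMap (φ n).toLinearMap = (φ (m + n)).toLinearMap) := by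
  refine ⟨fun f => ?_, fun lam hlam => ?_, ?_⟩
  · obtain ⟨u, rfl⟩ := KAlg.alphaEquiv.surjective f
    exact ⟨(u : 𝕜ˣ), (mem_rootsOfUnity' 4 _).mp u.2, by simp⟩
  · let u := rootsOfUnity.mkOfPowEq lam hlam
    exact ⟨KAlg.alpha u, by simp [u], fun f hf => KAlg.eq_alpha hf.1⟩
  · obtain ⟨ζ, rfl⟩ := hξ.isUnit (by norm_num)
    have hζ : IsPrimitiveRoot ζ⁻¹ 4 := (IsPrimitiveRoot.coe_units_iff.mp hξ).inv
    let e := zmodEquivRootsOfUnity hζ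
    refine ⟨(e.toEquiv.trans Additive.toMul).trans KAlg.alphaEquiv, ?_, fun m n => ?_⟩
    · simp [e, coe_zmodEquivRootsOfUnity_one]
    · simpa using KAlg.kConv_alpha hΔ (e m).toMul (e n).toMul

/-- The algebra homomorphisms `K → 𝕜` are exactly the four maps `α_λ`
indexed by the 4th roots of unity `λ`, with `α_λ(a) = λ`, `α_λ(b) = α_λ(c) = 0`,
`α_λ(d) = λ⁻¹`; moreover, under the convolution product determined by the comultiplication
`Δ` of `K`, they form a group isomorphic to `ℤ/4ℤ` generated by `α_{ξ⁻¹}`. -/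
theorem stmt_2 (𝕜 : Type) [Field 𝕜] [IsAlgClosed 𝕜] [CharZero 𝕜]
    (ξ : 𝕜) (hξ : IsPrimitiveRoot ξ 4)
    (Δ : KAlg 𝕜 ξ →ₐ[𝕜] KAlg 𝕜 ξ ⊗[𝕜] KAlg 𝕜 ξ) (hΔ : KComulOn 𝕜 ξ Δ) :
    -- every algebra homomorphism `K → 𝕜` is an `α_λ`
    (∀ f : KAlg 𝕜 ξ →ₐ[𝕜] 𝕜, ∃ lam : 𝕜, lam ^ 4 = 1 ∧
      f (kA 𝕜 ξ) = lam ∧ f (kB 𝕜 ξ) = 0 ∧ f (kC 𝕜 ξ) = 0 ∧ f (kD 𝕜 ξ) = lam⁻¹) ∧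
    -- conversely, each 4th root of unity `λ` yields exactly one such homomorphism `α_λ`
    (∀ lam : 𝕜, lam ^ 4 = 1 → ∃! f : KAlg 𝕜 ξ →ₐ[𝕜] 𝕜,
      f (kA 𝕜 ξ) = lam ∧ f (kB 𝕜 ξ) = 0 ∧ f (kC 𝕜 ξ) = 0 ∧ f (kD 𝕜 ξ) = lam⁻¹) ∧
    -- under convolution they form a group isomorphic to `ℤ/4ℤ`, generated by `α_{ξ⁻¹}`
    (∃ φ : ZMod 4 ≃ (KAlg 𝕜 ξ →ₐ[𝕜] 𝕜),
      ((φ 1) (kA 𝕜 ξ) = ξ⁻¹ ∧ (φ 1) (kB 𝕜 ξ) = 0 ∧ (φ 1) (kC 𝕜 ξ) = 0 ∧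
        (φ 1) (kD 𝕜 ξ) = ξ) ∧
      ∀ m n : ZMod 4,
        KConv 𝕜 ξ Δ (φ m).toLinearMap (φ n).toLinearMap = (φ (m + n)).toLinearMap) :=
  stmt_2_general 𝕜 ξ hξ Δ hΔ
end

section
/- Every algebra homomorphism D → k is equal to χʲ for a unique j ∈ Z/4, and conversely each χʲ is a well-defined algebra homomorphism D → k; hence D has exactly four 1-dimensional left modules up to isomorphism, namely k_{χ⁰}, k_{χ¹}, k_{χ²}, k_{χ³}. -/
open scoped TensorProduct

/-- Generators of the Drinfeld double `D = D(K^cop)`. -/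
inductive DGen : Type
  | a | b | c | d | x | g

open FreeAlgebra in
/-- The defining relations of the algebra `D = D(K^cop)`. -/
inductive DRel (𝕜 : Type) [Field 𝕜] (ξ ν : 𝕜) :
    FreeAlgebra 𝕜 DGen → FreeAlgebra 𝕜 DGen → Prop
  | ab : DRel 𝕜 ξ ν (ι 𝕜 DGen.a * ι 𝕜 DGen.b) (ξ • (ι 𝕜 DGen.b * ι 𝕜 DGen.a))
  | ac : DRel 𝕜 ξ ν (ι 𝕜 DGen.a * ι 𝕜 DGen.c) (ξ • (ι 𝕜 DGen.c * ι 𝕜 DGen.a))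
  | cb : DRel 𝕜 ξ ν (ι 𝕜 DGen.c * ι 𝕜 DGen.b) 0
  | bc : DRel 𝕜 ξ ν (ι 𝕜 DGen.b * ι 𝕜 DGen.c) 0
  | cd : DRel 𝕜 ξ ν (ι 𝕜 DGen.c * ι 𝕜 DGen.d) (ξ • (ι 𝕜 DGen.d * ι 𝕜 DGen.c))
  | bd : DRel 𝕜 ξ ν (ι 𝕜 DGen.b * ι 𝕜 DGen.d) (ξ • (ι 𝕜 DGen.d * ι 𝕜 DGen.b))
  | adcomm : DRel 𝕜 ξ ν (ι 𝕜 DGen.a * ι 𝕜 DGen.d) (ι 𝕜 DGen.d * ι 𝕜 DGen.a)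
  | adone : DRel 𝕜 ξ ν (ι 𝕜 DGen.a * ι 𝕜 DGen.d) 1
  | bsq : DRel 𝕜 ξ ν (ι 𝕜 DGen.b * ι 𝕜 DGen.b) 0
  | csq : DRel 𝕜 ξ ν (ι 𝕜 DGen.c * ι 𝕜 DGen.c) 0
  | aac : DRel 𝕜 ξ ν (ι 𝕜 DGen.a * ι 𝕜 DGen.a * ι 𝕜 DGen.c) (ι 𝕜 DGen.b)
  | afour : DRel 𝕜 ξ ν (ι 𝕜 DGen.a ^ 4) 1
  | gfour : DRel 𝕜 ξ ν (ι 𝕜 DGen.g ^ 4) 1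
  | xsq : DRel 𝕜 ξ ν (ι 𝕜 DGen.x * ι 𝕜 DGen.x) (ι 𝕜 DGen.g * ι 𝕜 DGen.g - 1)
  | gx : DRel 𝕜 ξ ν (ι 𝕜 DGen.g * ι 𝕜 DGen.x) (-(ι 𝕜 DGen.x * ι 𝕜 DGen.g))
  | ag : DRel 𝕜 ξ ν (ι 𝕜 DGen.a * ι 𝕜 DGen.g) (ι 𝕜 DGen.g * ι 𝕜 DGen.a)
  | bg : DRel 𝕜 ξ ν (ι 𝕜 DGen.b * ι 𝕜 DGen.g) (-(ι 𝕜 DGen.g * ι 𝕜 DGen.b))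
  | cg : DRel 𝕜 ξ ν (ι 𝕜 DGen.c * ι 𝕜 DGen.g) (-(ι 𝕜 DGen.g * ι 𝕜 DGen.c))
  | dg : DRel 𝕜 ξ ν (ι 𝕜 DGen.d * ι 𝕜 DGen.g) (ι 𝕜 DGen.g * ι 𝕜 DGen.d)
  | axr : DRel 𝕜 ξ ν (ι 𝕜 DGen.a * ι 𝕜 DGen.x)
      ((ν * ξ) • (ι 𝕜 DGen.b + ι 𝕜 DGen.g * ι 𝕜 DGen.c) - ξ • (ι 𝕜 DGen.x * ι 𝕜 DGen.a))
  | bxr : DRel 𝕜 ξ ν (ι 𝕜 DGen.b * ι 𝕜 DGen.x)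
      ((ν * ξ) • (ι 𝕜 DGen.a - ι 𝕜 DGen.g * ι 𝕜 DGen.d) + ξ • (ι 𝕜 DGen.x * ι 𝕜 DGen.b))
  | cxr : DRel 𝕜 ξ ν (ι 𝕜 DGen.c * ι 𝕜 DGen.x)
      ((ν * ξ) • (ι 𝕜 DGen.d - ι 𝕜 DGen.g * ι 𝕜 DGen.a) - ξ • (ι 𝕜 DGen.x * ι 𝕜 DGen.c))
  | dxr : DRel 𝕜 ξ ν (ι 𝕜 DGen.d * ι 𝕜 DGen.x)
      ((ν * ξ) • (ι 𝕜 DGen.c + ι 𝕜 DGen.g * ι 𝕜 DGen.b) + ξ • (ι 𝕜 DGen.x * ι 𝕜 DGen.d))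

/-- The Drinfeld double `D = D(K^cop)`, presented by generators and relations. -/
abbrev DAlg (𝕜 : Type) [Field 𝕜] (ξ ν : 𝕜) : Type := RingQuot (DRel 𝕜 ξ ν)

variable (𝕜 : Type) [Field 𝕜] (ξ ν : 𝕜)

/-- The generator `a` of `D`. -/
noncomputable def gA : DAlg 𝕜 ξ ν := RingQuot.mkAlgHom 𝕜 (DRel 𝕜 ξ ν) (FreeAlgebra.ι 𝕜 DGen.a)
/-- The generator `b` of `D`. -/
noncomputable def gB : DAlg 𝕜 ξ ν := RingQuot.mkAlgHom 𝕜 (DRel 𝕜 ξ ν) (FreeAlgebra.ι 𝕜 DGen.b)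
/-- The generator `c` of `D`. -/
noncomputable def gC : DAlg 𝕜 ξ ν := RingQuot.mkAlgHom 𝕜 (DRel 𝕜 ξ ν) (FreeAlgebra.ι 𝕜 DGen.c)
/-- The generator `d` of `D`. -/
noncomputable def gD : DAlg 𝕜 ξ ν := RingQuot.mkAlgHom 𝕜 (DRel 𝕜 ξ ν) (FreeAlgebra.ι 𝕜 DGen.d)
/-- The generator `x` of `D`. -/
noncomputable def gX : DAlg 𝕜 ξ ν := RingQuot.mkAlgHom 𝕜 (DRel 𝕜 ξ ν) (FreeAlgebra.ι 𝕜 DGen.x)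
/-- The generator `g` of `D`. -/
noncomputable def gG : DAlg 𝕜 ξ ν := RingQuot.mkAlgHom 𝕜 (DRel 𝕜 ξ ν) (FreeAlgebra.ι 𝕜 DGen.g)

variable {𝕜 ξ ν}
variable {V W : Type} [AddCommGroup V] [Module 𝕜 V] [AddCommGroup W] [Module 𝕜 W]

/-- A `𝕜`-subspace is invariant under a representation of `D`. -/
def DInvariant (ρ : DAlg 𝕜 ξ ν →ₐ[𝕜] Module.End 𝕜 V) (U : Submodule 𝕜 V) : Prop :=
  ∀ z : DAlg 𝕜 ξ ν, ∀ w ∈ U, ρ z w ∈ U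

/-- A representation of `D` is simple (the corresponding `D`-module is simple). -/
def DSimpleRep (ρ : DAlg 𝕜 ξ ν →ₐ[𝕜] Module.End 𝕜 V) : Prop :=
  Nontrivial V ∧ ∀ U : Submodule 𝕜 V, DInvariant ρ U → U = ⊥ ∨ U = ⊤

/-- A representation of `D` is indecomposable. -/
def DIndecRep (ρ : DAlg 𝕜 ξ ν →ₐ[𝕜] Module.End 𝕜 V) : Prop :=
  Nontrivial V ∧ ∀ U₁ U₂ : Submodule 𝕜 V, DInvariant ρ U₁ → DInvariant ρ U₂ →
    IsCompl U₁ U₂ → U₁ = ⊥ ∨ U₂ = ⊥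

/-- The vector `v` spans a copy of the character `χ^j` inside a representation of `D`:
the generators act on `v` by the scalars `χ^j(a) = ξ^j`, `χ^j(b) = χ^j(c) = χ^j(x) = 0`,
`χ^j(d) = ξ^{-j}`, `χ^j(g) = (-1)^j`. -/
def ChiOn (ρ : DAlg 𝕜 ξ ν →ₐ[𝕜] Module.End 𝕜 V) (j : ZMod 4) (v : V) : Prop :=
  ρ (gA 𝕜 ξ ν) v = ξ ^ j.val • v ∧ ρ (gB 𝕜 ξ ν) v = 0 ∧ ρ (gC 𝕜 ξ ν) v = 0 ∧
  ρ (gD 𝕜 ξ ν) v = (ξ ^ j.val)⁻¹ • v ∧ ρ (gX 𝕜 ξ ν) v = 0 ∧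
  ρ (gG 𝕜 ξ ν) v = (-1 : 𝕜) ^ j.val • v

/-- The pair `(e₁, e₂)` realizes the defining action of the module `V_{i,j}`. -/
def VijOn (ρ : DAlg 𝕜 ξ ν →ₐ[𝕜] Module.End 𝕜 V) (i j : ZMod 4) (e₁ e₂ : V) : Prop :=
  ρ (gA 𝕜 ξ ν) e₁ = ξ ^ i.val • e₁ ∧ ρ (gA 𝕜 ξ ν) e₂ = ξ ^ (i.val + 3) • e₂ ∧
  ρ (gB 𝕜 ξ ν) e₁ = 0 ∧ ρ (gB 𝕜 ξ ν) e₂ = (-1 : 𝕜) ^ i.val • e₁ ∧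
  ρ (gC 𝕜 ξ ν) e₁ = 0 ∧ ρ (gC 𝕜 ξ ν) e₂ = e₁ ∧
  ρ (gD 𝕜 ξ ν) e₁ = (ξ ^ i.val)⁻¹ • e₁ ∧ ρ (gD 𝕜 ξ ν) e₂ = (ξ * (ξ ^ i.val)⁻¹) • e₂ ∧
  ρ (gG 𝕜 ξ ν) e₁ = ξ ^ j.val • e₁ ∧ ρ (gG 𝕜 ξ ν) e₂ = ξ ^ (j.val + 2) • e₂ ∧
  ρ (gX 𝕜 ξ ν) e₁ = (ν * ξ * (ξ ^ (3 * i.val) - ξ ^ (i.val + j.val))) • e₂ ∧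
  ρ (gX 𝕜 ξ ν) e₂ = (ν * ξ / 2 * (ξ ^ i.val + ξ ^ (3 * i.val + j.val))) • e₁

/-- The tuple `p` realizes the defining action of the module `P(ℓ) = P ⊗ k_{χ^ℓ}`
(`P = P(0)` being the projective cover of the trivial module). -/
def POn (ρ : DAlg 𝕜 ξ ν →ₐ[𝕜] Module.End 𝕜 V) (ℓ : ZMod 4) (p : Fin 4 → V) : Prop :=
  ρ (gA 𝕜 ξ ν) (p 0) = ξ ^ ℓ.val • p 0 ∧ ρ (gA 𝕜 ξ ν) (p 1) = -(ξ ^ (ℓ.val + 1)) • p 1 ∧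
  ρ (gA 𝕜 ξ ν) (p 2) = ξ ^ (ℓ.val + 1) • p 2 ∧ ρ (gA 𝕜 ξ ν) (p 3) = ξ ^ ℓ.val • p 3 ∧
  ρ (gB 𝕜 ξ ν) (p 0) = ξ ^ ℓ.val • p 2 ∧ ρ (gB 𝕜 ξ ν) (p 1) = ξ ^ (ℓ.val + 1) • p 3 ∧
  ρ (gB 𝕜 ξ ν) (p 2) = 0 ∧ ρ (gB 𝕜 ξ ν) (p 3) = 0 ∧
  ρ (gC 𝕜 ξ ν) (p 0) = -((ξ ^ ℓ.val)⁻¹) • p 2 ∧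
  ρ (gC 𝕜 ξ ν) (p 1) = (ξ * (ξ ^ ℓ.val)⁻¹) • p 3 ∧
  ρ (gC 𝕜 ξ ν) (p 2) = 0 ∧ ρ (gC 𝕜 ξ ν) (p 3) = 0 ∧
  ρ (gD 𝕜 ξ ν) (p 0) = (ξ ^ ℓ.val)⁻¹ • p 0 ∧
  ρ (gD 𝕜 ξ ν) (p 1) = (ξ * (ξ ^ ℓ.val)⁻¹) • p 1 ∧
  ρ (gD 𝕜 ξ ν) (p 2) = -(ξ * (ξ ^ ℓ.val)⁻¹) • p 2 ∧
  ρ (gD 𝕜 ξ ν) (p 3) = (ξ ^ ℓ.val)⁻¹ • p 3 ∧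
  ρ (gX 𝕜 ξ ν) (p 0) = p 1 + ν • p 2 ∧ ρ (gX 𝕜 ξ ν) (p 1) = -(ν • p 3) ∧
  ρ (gX 𝕜 ξ ν) (p 2) = p 3 ∧ ρ (gX 𝕜 ξ ν) (p 3) = 0 ∧
  ρ (gG 𝕜 ξ ν) (p 0) = (-1 : 𝕜) ^ ℓ.val • p 0 ∧
  ρ (gG 𝕜 ξ ν) (p 1) = -((-1 : 𝕜) ^ ℓ.val) • p 1 ∧
  ρ (gG 𝕜 ξ ν) (p 2) = -((-1 : 𝕜) ^ ℓ.val) • p 2 ∧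
  ρ (gG 𝕜 ξ ν) (p 3) = (-1 : 𝕜) ^ ℓ.val • p 3

/-- `ρT` is the tensor product representation of `ρM` and `ρN` on `M ⊗ N`, where the action
of `D` on a tensor product is given through the coproduct of the Drinfeld double:
`a ↦ a⊗a + c⊗b`, `b ↦ b⊗a + d⊗b`, `c ↦ a⊗c + c⊗d`, `d ↦ b⊗c + d⊗d`, `g ↦ g⊗g`,
`x ↦ x⊗1 + g⊗x`. -/
def TensorRepOn (ρM : DAlg 𝕜 ξ ν →ₐ[𝕜] Module.End 𝕜 V) (ρN : DAlg 𝕜 ξ ν →ₐ[𝕜] Module.End 𝕜 W)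
    (ρT : DAlg 𝕜 ξ ν →ₐ[𝕜] Module.End 𝕜 (V ⊗[𝕜] W)) : Prop :=
  ρT (gA 𝕜 ξ ν) = TensorProduct.map (ρM (gA 𝕜 ξ ν)) (ρN (gA 𝕜 ξ ν)) +
      TensorProduct.map (ρM (gC 𝕜 ξ ν)) (ρN (gB 𝕜 ξ ν)) ∧
  ρT (gB 𝕜 ξ ν) = TensorProduct.map (ρM (gB 𝕜 ξ ν)) (ρN (gA 𝕜 ξ ν)) +
      TensorProduct.map (ρM (gD 𝕜 ξ ν)) (ρN (gB 𝕜 ξ ν)) ∧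
  ρT (gC 𝕜 ξ ν) = TensorProduct.map (ρM (gA 𝕜 ξ ν)) (ρN (gC 𝕜 ξ ν)) +
      TensorProduct.map (ρM (gC 𝕜 ξ ν)) (ρN (gD 𝕜 ξ ν)) ∧
  ρT (gD 𝕜 ξ ν) = TensorProduct.map (ρM (gB 𝕜 ξ ν)) (ρN (gC 𝕜 ξ ν)) +
      TensorProduct.map (ρM (gD 𝕜 ξ ν)) (ρN (gD 𝕜 ξ ν)) ∧
  ρT (gG 𝕜 ξ ν) = TensorProduct.map (ρM (gG 𝕜 ξ ν)) (ρN (gG 𝕜 ξ ν)) ∧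
  ρT (gX 𝕜 ξ ν) = TensorProduct.map (ρM (gX 𝕜 ξ ν)) LinearMap.id +
      TensorProduct.map (ρM (gG 𝕜 ξ ν)) (ρN (gX 𝕜 ξ ν))

/-- `f` is the character `χ^j` of `D`: `χ^j(a) = ξ^j`, `χ^j(b) = χ^j(c) = χ^j(x) = 0`,
`χ^j(d) = ξ^{-j}`, `χ^j(g) = (-1)^j`. -/
def IsChi (𝕜 : Type) [Field 𝕜] (ξ ν : 𝕜) (f : DAlg 𝕜 ξ ν →ₐ[𝕜] 𝕜) (j : ZMod 4) : Prop :=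
  f (gA 𝕜 ξ ν) = ξ ^ j.val ∧ f (gB 𝕜 ξ ν) = 0 ∧ f (gC 𝕜 ξ ν) = 0 ∧
  f (gD 𝕜 ξ ν) = (ξ ^ j.val)⁻¹ ∧ f (gX 𝕜 ξ ν) = 0 ∧ f (gG 𝕜 ξ ν) = (-1 : 𝕜) ^ j.val

/-! Endomorphisms of a 1-dimensional space are scalars, so only algebra homomorphisms `f : D → 𝕜`
matter. In `𝕜` the relations `b² = c² = 0` and `gx = -xg` with `g` invertible kill `b`, `c` and `x`;
then `bx - ξxb = νξ(a - gd)` reduces to `a = gd`, and `ad = 1` gives `g = a²` and `d = a⁻¹`. So `f`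
is determined by the fourth root of unity `f a`, and conversely every fourth root of unity `t`
satisfies the relations through `a ↦ t`, `d ↦ t³`, `g ↦ t²` and `b, c, x ↦ 0`. -/

theorem sq_eq_neg_one_of_isPrimitiveRoot_four {R : Type*} [CommRing R] [NoZeroDivisors R] {ζ : R}
    (hζ : IsPrimitiveRoot ζ 4) : ζ ^ 2 = -1 :=
  (hζ.pow (n := 4) (by norm_num) (by norm_num : 4 = 2 * 2)).eq_neg_one_of_two_right

theorem neg_one_pow_eq_sq_of_isPrimitiveRoot_four {R : Type*} [CommRing R] [NoZeroDivisors R]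
    {ζ : R} (hζ : IsPrimitiveRoot ζ 4) (n : ℕ) : (-1) ^ n = (ζ ^ n) ^ 2 := by
  rw [← sq_eq_neg_one_of_isPrimitiveRoot_four hζ, pow_right_comm]

theorem two_ne_zero_of_isPrimitiveRoot_four {R : Type*} [CommRing R] [IsDomain R] {ζ : R}
    (hζ : IsPrimitiveRoot ζ 4) : (2 : R) ≠ 0 := by
  intro h2
  apply hζ.neZero'.out
  push_cast
  linear_combination 2 * h2

theorem existsUnique_zmod_pow_val_eq {R : Type*} [CommRing R] [IsDomain R] {n : ℕ} [NeZero n]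
    {ζ t : R} (hζ : IsPrimitiveRoot ζ n) (ht : t ^ n = 1) : ∃! j : ZMod n, ζ ^ j.val = t := by
  obtain ⟨i, hi, rfl⟩ := hζ.eq_pow_of_pow_eq_one ht
  refine ⟨i, by simp only [ZMod.val_cast_of_lt hi], fun j hj => ?_⟩
  rw [← hζ.pow_inj j.val_lt hi hj, ZMod.natCast_zmod_val]

theorem exists_algHom_forall_apply_eq_smul {K B M : Type*} [CommSemiring K]
    [StrongRankCondition K] [Semiring B] [Algebra K B] [AddCommMonoid M] [Module K M]
    [Module.Free K M] (hM : Module.finrank K M = 1) (ρ : B →ₐ[K] Module.End K M) :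
    ∃ f : B →ₐ[K] K, ∀ z v, ρ z v = f z • v := by
  have hbij : Function.Bijective (Algebra.ofId K (Module.End K M)) := by
    rw [Function.bijective_iff_existsUnique]
    intro T
    simpa only [Algebra.ofId_apply, Module.algebraMap_end_eq_smul_id, eq_comm] using
      T.existsUnique_eq_smul_id_of_finrank_eq_one hM
  let e : K ≃ₐ[K] Module.End K M := AlgEquiv.ofBijective _ hbij
  exact ⟨e.symm.toAlgHom.comp ρ, fun z v => congrArg (· v) (e.apply_symm_apply (ρ z)).symm⟩

namespace DAlg

theorem gA_pow_four : gA 𝕜 ξ ν ^ 4 = 1 := by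
  simpa only [gA, map_pow, map_one] using RingQuot.mkAlgHom_rel 𝕜 (DRel.afour (ξ := ξ) (ν := ν))

theorem gA_mul_gD : gA 𝕜 ξ ν * gD 𝕜 ξ ν = 1 := by
  simpa only [gA, gD, map_mul, map_one] using RingQuot.mkAlgHom_rel 𝕜 (DRel.adone (ξ := ξ) (ν := ν))

theorem gB_sq : gB 𝕜 ξ ν ^ 2 = 0 := by
  simpa only [gB, sq, map_mul, map_zero] using
    RingQuot.mkAlgHom_rel 𝕜 (DRel.bsq (ξ := ξ) (ν := ν))

theorem gC_sq : gC 𝕜 ξ ν ^ 2 = 0 := by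
  simpa only [gC, sq, map_mul, map_zero] using
    RingQuot.mkAlgHom_rel 𝕜 (DRel.csq (ξ := ξ) (ν := ν))

theorem gG_pow_four : gG 𝕜 ξ ν ^ 4 = 1 := by
  simpa only [gG, map_pow, map_one] using RingQuot.mkAlgHom_rel 𝕜 (DRel.gfour (ξ := ξ) (ν := ν))

theorem gG_mul_gX : gG 𝕜 ξ ν * gX 𝕜 ξ ν = -(gX 𝕜 ξ ν * gG 𝕜 ξ ν) := by
  simpa only [gG, gX, map_mul, map_neg] using RingQuot.mkAlgHom_rel 𝕜 (DRel.gx (ξ := ξ) (ν := ν))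

theorem gB_mul_gX : gB 𝕜 ξ ν * gX 𝕜 ξ ν =
    (ν * ξ) • (gA 𝕜 ξ ν - gG 𝕜 ξ ν * gD 𝕜 ξ ν) + ξ • (gX 𝕜 ξ ν * gB 𝕜 ξ ν) := by
  simpa only [gA, gB, gD, gG, gX, map_mul, map_add, map_sub, map_smul] using
    RingQuot.mkAlgHom_rel 𝕜 (DRel.bxr (ξ := ξ) (ν := ν))

section Reduced

variable {A : Type*} [Semiring A] [IsReduced A] [Algebra 𝕜 A] (f : DAlg 𝕜 ξ ν →ₐ[𝕜] A)

theorem map_gB : f (gB 𝕜 ξ ν) = 0 :=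
  eq_zero_of_pow_eq_zero (n := 2) (by rw [← map_pow, gB_sq, map_zero])

theorem map_gC : f (gC 𝕜 ξ ν) = 0 :=
  eq_zero_of_pow_eq_zero (n := 2) (by rw [← map_pow, gC_sq, map_zero])

end Reduced

section Commutative

variable {A : Type*} [CommRing A] [Algebra 𝕜 A] (f : DAlg 𝕜 ξ ν →ₐ[𝕜] A)

theorem map_gX (h2 : (2 : 𝕜) ≠ 0) : f (gX 𝕜 ξ ν) = 0 := by
  have hg : IsUnit (f (gG 𝕜 ξ ν)) :=
    .of_pow_eq_one (by rw [← map_pow, gG_pow_four, map_one]) four_ne_zero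
  have hgx : f (gG 𝕜 ξ ν) * f (gX 𝕜 ξ ν) = -(f (gX 𝕜 ξ ν) * f (gG 𝕜 ξ ν)) := by
    rw [← map_mul, gG_mul_gX, map_neg, map_mul]
  have h : (2 : 𝕜) • (f (gG 𝕜 ξ ν) * f (gX 𝕜 ξ ν)) = 0 := by
    rw [two_smul]
    linear_combination hgx
  exact hg.mul_right_eq_zero.mp ((isUnit_iff_ne_zero.mpr h2).smul_eq_zero.mp h)

theorem map_gG [IsReduced A] (hξ : ξ ≠ 0) (hν : ν ≠ 0) :
    f (gG 𝕜 ξ ν) = f (gA 𝕜 ξ ν) ^ 2 := by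
  have had : f (gA 𝕜 ξ ν) * f (gD 𝕜 ξ ν) = 1 := by rw [← map_mul, gA_mul_gD, map_one]
  have h : (ν * ξ) • (f (gA 𝕜 ξ ν) - f (gG 𝕜 ξ ν) * f (gD 𝕜 ξ ν)) = 0 := by
    simpa [map_gB] using (congrArg f (gB_mul_gX (ξ := ξ) (ν := ν))).symm
  have hagd : f (gA 𝕜 ξ ν) - f (gG 𝕜 ξ ν) * f (gD 𝕜 ξ ν) = 0 :=
    (isUnit_iff_ne_zero.mpr (mul_ne_zero hν hξ)).smul_eq_zero.mp h
  linear_combination -f (gA 𝕜 ξ ν) * hagd - f (gG 𝕜 ξ ν) * had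

end Commutative

section Character

variable {A : Type*} [CommRing A] [Algebra 𝕜 A]

/-- The values on the generators of the character of `D` attached to a fourth root of unity `t`.
The inverse of `t` is written `t ^ 3`, so that the relations become polynomial identities. -/
def characterGen (t : A) : DGen → A
  | .a => t
  | .b | .c | .x => 0
  | .d => t ^ 3
  | .g => t ^ 2

theorem lift_characterGen_eq_of_rel {t : A} (ht : t ^ 4 = 1) {p q : FreeAlgebra 𝕜 DGen}
    (h : DRel 𝕜 ξ ν p q) :
    FreeAlgebra.lift 𝕜 (characterGen t) p = FreeAlgebra.lift 𝕜 (characterGen t) q := by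
  cases h <;> simp only [map_mul, map_add, map_sub, map_neg, map_smul, map_pow, map_one, map_zero,
    FreeAlgebra.lift_ι_apply, characterGen, mul_zero, zero_mul, smul_zero, neg_zero, add_zero,
    sub_zero]
  case adcomm => ring
  case adone => linear_combination ht
  case afour => exact ht
  case gfour => linear_combination (t ^ 4 + 1) * ht
  case xsq => linear_combination -ht
  case ag => ring
  case dg => ring
  case bxr =>
    have : t - t ^ 2 * t ^ 3 = 0 := by linear_combination -t * ht
    rw [this, smul_zero]
  case cxr =>
    have : t ^ 3 - t ^ 2 * t = 0 := by ring
    rw [this, smul_zero]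

/-- The character of `D` with values in a commutative algebra that sends `a` to a given fourth root
of unity. -/
noncomputable def character (ξ ν : 𝕜) {t : A} (ht : t ^ 4 = 1) : DAlg 𝕜 ξ ν →ₐ[𝕜] A :=
  RingQuot.liftAlgHom 𝕜
    ⟨FreeAlgebra.lift 𝕜 (characterGen t), fun _ _ => lift_characterGen_eq_of_rel ht⟩

end Character

theorem isChi_character (hξ : IsPrimitiveRoot ξ 4) {j : ZMod 4} (ht : (ξ ^ j.val) ^ 4 = 1) :
    IsChi 𝕜 ξ ν (character ξ ν ht) j := by
  have hinv : (ξ ^ j.val) ^ 3 = (ξ ^ j.val)⁻¹ :=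
    eq_inv_of_mul_eq_one_left (by rw [← pow_succ, ht])
  simp [IsChi, character, gA, gB, gC, gD, gX, gG, characterGen, hinv,
    neg_one_pow_eq_sq_of_isPrimitiveRoot_four hξ]

theorem isChi_iff (hξ : IsPrimitiveRoot ξ 4) (hν : ν ≠ 0) (f : DAlg 𝕜 ξ ν →ₐ[𝕜] 𝕜) (j : ZMod 4) :
    IsChi 𝕜 ξ ν f j ↔ ξ ^ j.val = f (gA 𝕜 ξ ν) := by
  refine ⟨fun h => h.1.symm, fun ha => ⟨ha.symm, map_gB f, map_gC f, ?_,
    map_gX f (two_ne_zero_of_isPrimitiveRoot_four hξ), ?_⟩⟩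
  · rw [ha]
    exact eq_inv_of_mul_eq_one_right (by rw [← map_mul, gA_mul_gD, map_one])
  · rw [map_gG f (hξ.ne_zero four_ne_zero) hν, neg_one_pow_eq_sq_of_isPrimitiveRoot_four hξ, ha]

theorem existsUnique_isChi (hξ : IsPrimitiveRoot ξ 4) (hν : ν ≠ 0) (f : DAlg 𝕜 ξ ν →ₐ[𝕜] 𝕜) :
    ∃! j : ZMod 4, IsChi 𝕜 ξ ν f j := by
  simp only [isChi_iff hξ hν]
  exact existsUnique_zmod_pow_val_eq hξ (by rw [← map_pow, gA_pow_four, map_one])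

theorem forall_chiOn_iff_isChi [Nontrivial V] {ρ : DAlg 𝕜 ξ ν →ₐ[𝕜] Module.End 𝕜 V}
    {f : DAlg 𝕜 ξ ν →ₐ[𝕜] 𝕜} (hρ : ∀ z v, ρ z v = f z • v) (j : ZMod 4) :
    (∀ v, ChiOn ρ j v) ↔ IsChi 𝕜 ξ ν f j := by
  refine ⟨fun h => ?_, ?_⟩
  · obtain ⟨v, hv⟩ := exists_ne (0 : V)
    obtain ⟨ha, hb, hc, hd, hx, hg⟩ := h v
    simp only [hρ, smul_left_inj hv, smul_eq_zero_iff_left hv] at ha hb hc hd hx hg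
    exact ⟨ha, hb, hc, hd, hx, hg⟩
  · rintro ⟨ha, hb, hc, hd, hx, hg⟩ v
    simp only [ChiOn, hρ, ha, hb, hc, hd, hx, hg, zero_smul, and_self]

theorem existsUnique_forall_chiOn (hξ : IsPrimitiveRoot ξ 4) (hν : ν ≠ 0)
    (hV : Module.finrank 𝕜 V = 1) (ρ : DAlg 𝕜 ξ ν →ₐ[𝕜] Module.End 𝕜 V) :
    ∃! j : ZMod 4, ∀ v, ChiOn ρ j v := by
  obtain ⟨f, hρ⟩ := exists_algHom_forall_apply_eq_smul hV ρ
  have : Nontrivial V := Module.nontrivial_of_finrank_eq_succ hV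
  simp only [forall_chiOn_iff_isChi hρ]
  exact existsUnique_isChi hξ hν f

end DAlg

theorem stmt_5_general (𝕜 : Type) [Field 𝕜] (ξ ν : 𝕜) (hξ : IsPrimitiveRoot ξ 4) (hν : ν ≠ 0) :
    (∀ j : ZMod 4, ∃ f : DAlg 𝕜 ξ ν →ₐ[𝕜] 𝕜, IsChi 𝕜 ξ ν f j) ∧
    (∀ f : DAlg 𝕜 ξ ν →ₐ[𝕜] 𝕜, ∃! j : ZMod 4, IsChi 𝕜 ξ ν f j) ∧
    (∀ (V : Type) (_ : AddCommGroup V) (_ : Module 𝕜 V), Module.finrank 𝕜 V = 1 →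
      ∀ ρ : DAlg 𝕜 ξ ν →ₐ[𝕜] Module.End 𝕜 V, ∃! j : ZMod 4, ∀ v : V, ChiOn ρ j v) := by
  refine ⟨fun j => ?_, DAlg.existsUnique_isChi hξ hν,
    fun _ _ _ hV ρ => DAlg.existsUnique_forall_chiOn hξ hν hV ρ⟩
  have hj : (ξ ^ j.val) ^ 4 = 1 := by rw [pow_right_comm, hξ.pow_eq_one, one_pow]
  exact ⟨DAlg.character ξ ν hj, DAlg.isChi_character hξ hj⟩

/-- Every algebra homomorphism `D → 𝕜` equals `χ^j` for a unique
`j ∈ ℤ/4`, and each `χ^j` is a well-defined algebra homomorphism `D → 𝕜`; hence `D` has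
exactly four `1`-dimensional left modules up to isomorphism, namely the `𝕜_{χ^j}`. -/
theorem stmt_5 (𝕜 : Type) [Field 𝕜] [IsAlgClosed 𝕜] [CharZero 𝕜]
    (ξ ν : 𝕜) (hξ : IsPrimitiveRoot ξ 4) (hν : ν ^ 2 = 2) :
    -- each `χ^j` is a well-defined algebra homomorphism `D → 𝕜`
    (∀ j : ZMod 4, ∃ f : DAlg 𝕜 ξ ν →ₐ[𝕜] 𝕜, IsChi 𝕜 ξ ν f j) ∧
    -- every algebra homomorphism `D → 𝕜` equals `χ^j` for a unique `j`
    (∀ f : DAlg 𝕜 ξ ν →ₐ[𝕜] 𝕜, ∃! j : ZMod 4, IsChi 𝕜 ξ ν f j) ∧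
    -- hence the `1`-dimensional left `D`-modules are, up to isomorphism, exactly the
    -- four modules `𝕜_{χ^j}`: every representation of `D` on a `1`-dimensional space has
    -- a (unique) character `χ^j` acting through scalars
    (∀ (V : Type) (_ : AddCommGroup V) (_ : Module 𝕜 V), Module.finrank 𝕜 V = 1 →
      ∀ ρ : DAlg 𝕜 ξ ν →ₐ[𝕜] Module.End 𝕜 V, ∃! j : ZMod 4, ∀ v : V, ChiOn ρ j v) :=
  stmt_5_general 𝕜 ξ ν hξ (by rintro rfl; norm_num at hν)
end
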